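/- arXiv:1112.0490 — 2 statements merged into one kernel-verified Lean document; each statement's English description precedes it below -/
import Mathlib

section
/- For every y ∈ ℝ³, the integral ∫_{ℝ³} e^{-|z|} e^{-|z-y|} / (|z| · |z-y|) dz equals 2π e^{-|y|}. -/
open MeasureTheory Real

/-!
Slice space by the planes orthogonal to the axis through the two foci `0` and `y`. On each slice,
replace the polar radius `r` by the sum of distances `s = ‖z‖ + ‖z - y‖`. Its derivative
`r * s / (‖z‖ * ‖z - y‖)` cancels both singularities, leaving the density `1 / s`. The axial
coordinates reached by the ellipsoid of parameter `s` fill an interval of length `s`, so the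
density becomes constant: `∫ g (‖z‖ + ‖z - y‖) / (‖z‖ * ‖z - y‖) dz = 2 * π * ∫ g` over
`(‖y‖, ∞)`. Taking `g s = exp (-s)` gives the kernel.
-/

open Set Filter
open scoped ENNReal

section CylindricalCoordinates

lemma lintegral_sq_add_sq {g : ℝ → ℝ≥0∞} (hg : Measurable g) :
    ∫⁻ p : ℝ × ℝ, g (p.1 ^ 2 + p.2 ^ 2) =
      ENNReal.ofReal (2 * π) * ∫⁻ r in Ioi 0, ENNReal.ofReal r * g (r ^ 2) := by
  have sq_add_sq_polar (p : ℝ × ℝ) :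
      (polarCoord.symm p).1 ^ 2 + (polarCoord.symm p).2 ^ 2 = p.1 ^ 2 := by
    simp only [polarCoord_symm_apply, mul_pow, ← mul_add, cos_sq_add_sin_sq, mul_one]
  have volume_angles : volume (Ioo (-π) π) = ENNReal.ofReal (2 * π) := by
    rw [Real.volume_Ioo, sub_neg_eq_add, two_mul]
  rw [← lintegral_comp_polarCoord_symm]
  simp_rw [sq_add_sq_polar, polarCoord_target, smul_eq_mul]
  rw [Measure.volume_eq_prod, ← Measure.prod_restrict, lintegral_prod _ (by fun_prop)]
  simp only [lintegral_const, Measure.restrict_apply_univ, volume_angles]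
  rw [lintegral_mul_const _ (by fun_prop), mul_comm]

lemma lintegral_euclideanSpace_fin_three {F : EuclideanSpace ℝ (Fin 3) → ℝ≥0∞}
    (hF : Measurable F) :
    ∫⁻ z, F z = ∫⁻ t : ℝ, ∫⁻ p : ℝ × ℝ, F !₂[t, p.1, p.2] := by
  rw [← (PiLp.volume_preserving_toLp (Fin 3)).lintegral_comp hF,
    ← (volume_preserving_piFinSuccAbove (fun _ : Fin 3 ↦ ℝ) 0).symm.lintegral_comp (by fun_prop),
    Measure.volume_eq_prod, lintegral_prod _ (by fun_prop)]
  refine lintegral_congr fun t ↦ ?_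
  rw [← (volume_preserving_finTwoArrow ℝ).symm.lintegral_comp (by fun_prop)]
  refine lintegral_congr fun p ↦ ?_
  congr 2
  ext i
  fin_cases i <;> rfl

lemma lintegral_cylindrical {F : ℝ → ℝ → ℝ≥0∞} (hF : Measurable (Function.uncurry F)) :
    ∫⁻ z : EuclideanSpace ℝ (Fin 3), F (z 0) (z 1 ^ 2 + z 2 ^ 2) =
      ENNReal.ofReal (2 * π) * ∫⁻ t, ∫⁻ r in Ioi 0, ENNReal.ofReal r * F t (r ^ 2) := by
  rw [lintegral_euclideanSpace_fin_three (by fun_prop),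
    ← lintegral_const_mul' _ _ ENNReal.ofReal_ne_top]
  exact lintegral_congr fun t ↦ lintegral_sq_add_sq (g := F t) (by fun_prop)

end CylindricalCoordinates

section FocalSum

/-- The sum of the distances to two foci on an axis, for a point at distance `r` from the axis
whose axial coordinates relative to the foci are `a` and `b`. It serves as the confocal elliptical
coordinate on a plane orthogonal to the axis. -/
noncomputable def focalSum (a b r : ℝ) : ℝ := √(a ^ 2 + r ^ 2) + √(b ^ 2 + r ^ 2)

lemma focalSum_zero (a b : ℝ) : focalSum a b 0 = |a| + |b| := by
  simp [focalSum, sqrt_sq_eq_abs]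

lemma continuous_focalSum (a b : ℝ) : Continuous (focalSum a b) := by
  unfold focalSum
  fun_prop

lemma strictMonoOn_focalSum (a b : ℝ) : StrictMonoOn (focalSum a b) (Ici 0) := by
  intro r (hr : 0 ≤ r) s _ hrs
  unfold focalSum
  gcongr

lemma tendsto_focalSum_atTop (a b : ℝ) : Tendsto (focalSum a b) atTop atTop := by
  refine tendsto_atTop_mono (fun r ↦ ?_) tendsto_id
  calc r ≤ √(a ^ 2 + r ^ 2) := le_sqrt_of_sq_le (le_add_of_nonneg_left (sq_nonneg a))
    _ ≤ focalSum a b r := le_add_of_nonneg_right (sqrt_nonneg _)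

lemma image_focalSum_Ioi (a b : ℝ) : focalSum a b '' Ioi 0 = Ioi (|a| + |b|) := by
  rw [← focalSum_zero]
  refine Subset.antisymm (image_subset_iff.2 fun r hr ↦ ?_)
    (intermediate_value_Ioi (continuous_focalSum a b).continuousOn (tendsto_focalSum_atTop a b))
  exact strictMonoOn_focalSum a b self_mem_Ici (Ioi_subset_Ici_self hr) hr

lemma hasDerivAt_sqrt_sq_add_sq (c : ℝ) {r : ℝ} (hr : 0 < r) :
    HasDerivAt (fun r ↦ √(c ^ 2 + r ^ 2)) (r / √(c ^ 2 + r ^ 2)) r := by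
  convert (((hasDerivAt_pow 2 r).const_add (c ^ 2)).sqrt (by positivity)) using 1
  simp [mul_div_mul_left]

lemma hasDerivAt_focalSum (a b : ℝ) {r : ℝ} (hr : 0 < r) :
    HasDerivAt (focalSum a b)
      (r * (√(a ^ 2 + r ^ 2) * √(b ^ 2 + r ^ 2))⁻¹ * focalSum a b r) r := by
  convert! (hasDerivAt_sqrt_sq_add_sq a hr).add (hasDerivAt_sqrt_sq_add_sq b hr) using 1
  unfold focalSum
  field_simp
  ring

lemma lintegral_focalSum (a b : ℝ) (g : ℝ → ℝ≥0∞) :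
    ∫⁻ r in Ioi 0, ENNReal.ofReal r *
        (ENNReal.ofReal (√(a ^ 2 + r ^ 2) * √(b ^ 2 + r ^ 2))⁻¹ * g (focalSum a b r)) =
      ∫⁻ s in Ioi (|a| + |b|), ENNReal.ofReal s⁻¹ * g s := by
  rw [← image_focalSum_Ioi, lintegral_image_eq_lintegral_deriv_mul_of_monotoneOn measurableSet_Ioi
    (fun r hr ↦ (hasDerivAt_focalSum a b hr).hasDerivWithinAt)
    ((strictMonoOn_focalSum a b).monotoneOn.mono Ioi_subset_Ici_self)]
  refine setLIntegral_congr_fun measurableSet_Ioi fun r (hr : 0 < r) ↦ ?_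
  have focalSum_pos : 0 < focalSum a b r := by unfold focalSum; positivity
  rw [← mul_assoc, ← mul_assoc, ← ENNReal.ofReal_mul hr.le, ← ENNReal.ofReal_mul (by positivity),
    mul_inv_cancel_right₀ focalSum_pos.ne']

end FocalSum

section AxialIntegral

lemma lintegral_lintegral_Ioi {α : Type*} [MeasurableSpace α] {μ : Measure α} [SFinite μ]
    {φ : α → ℝ} (hφ : Measurable φ) {h : ℝ → ℝ≥0∞} (hh : Measurable h) :
    ∫⁻ x, (∫⁻ s in Ioi (φ x), h s) ∂μ = ∫⁻ s, μ {x | φ x < s} * h s := by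
  have measurableSet_subgraph : MeasurableSet {p : α × ℝ | φ p.1 < p.2} :=
    measurableSet_lt (by fun_prop) (by fun_prop)
  calc ∫⁻ x, (∫⁻ s in Ioi (φ x), h s) ∂μ
      = ∫⁻ x, (∫⁻ s, {p : α × ℝ | φ p.1 < p.2}.indicator (fun p ↦ h p.2) (x, s)) ∂μ :=
        lintegral_congr fun x ↦ (lintegral_indicator measurableSet_Ioi h).symm
    _ = ∫⁻ s, ∫⁻ x, {x | φ x < s}.indicator (fun _ ↦ h s) x ∂μ :=
        lintegral_lintegral_swap
          ((hh.comp measurable_snd).indicator measurableSet_subgraph).aemeasurable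
    _ = ∫⁻ s, μ {x | φ x < s} * h s := by
        refine lintegral_congr fun s ↦ ?_
        rw [lintegral_indicator_const (measurableSet_lt hφ measurable_const), mul_comm]

lemma abs_add_abs_sub_eq_max (t R : ℝ) : |t| + |t - R| = max |R| (2 * |t - R / 2|) := by
  grind

lemma volume_setOf_abs_add_abs_sub_lt (R s : ℝ) :
    volume {t : ℝ | |t| + |t - R| < s} = (Ioi |R|).indicator ENNReal.ofReal s := by
  simp_rw [abs_add_abs_sub_eq_max, max_lt_iff]
  by_cases hs : |R| < s
  · have setOf_eq_ball : {t : ℝ | |R| < s ∧ 2 * |t - R / 2| < s} = Metric.ball (R / 2) (s / 2) := by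
      ext t
      simp [hs, Real.dist_eq, lt_div_iff₀']
    rw [setOf_eq_ball, Real.volume_ball, indicator_of_mem (mem_Ioi.2 hs),
      mul_div_cancel₀ _ two_ne_zero]
  · simp [hs]

lemma lintegral_lintegral_Ioi_abs_add_abs_sub (R : ℝ) {g : ℝ → ℝ≥0∞} (hg : Measurable g) :
    ∫⁻ t : ℝ, ∫⁻ s in Ioi (|t| + |t - R|), ENNReal.ofReal s⁻¹ * g s = ∫⁻ s in Ioi |R|, g s := by
  rw [lintegral_lintegral_Ioi (by fun_prop) (by fun_prop), ← lintegral_indicator measurableSet_Ioi]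
  refine lintegral_congr fun s ↦ ?_
  rw [volume_setOf_abs_add_abs_sub_lt]
  by_cases hs : s ∈ Ioi |R|
  · have s_pos : 0 < s := (abs_nonneg R).trans_lt hs
    rw [indicator_of_mem hs, indicator_of_mem hs, ← mul_assoc, ← ENNReal.ofReal_mul s_pos.le,
      mul_inv_cancel₀ s_pos.ne', ENNReal.ofReal_one, one_mul]
  · rw [indicator_of_notMem hs, indicator_of_notMem hs, zero_mul]

end AxialIntegral

section TwoCenterIntegral

lemma norm_sub_single_zero_fin_three (z : EuclideanSpace ℝ (Fin 3)) (R : ℝ) :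
    ‖z - EuclideanSpace.single 0 R‖ = √((z 0 - R) ^ 2 + (z 1 ^ 2 + z 2 ^ 2)) := by
  simp [EuclideanSpace.norm_eq, Fin.sum_univ_three, add_assoc]

lemma lintegral_norm_add_norm_sub_single (R : ℝ) {g : ℝ → ℝ≥0∞} (hg : Measurable g) :
    ∫⁻ z : EuclideanSpace ℝ (Fin 3),
        ENNReal.ofReal (‖z‖ * ‖z - EuclideanSpace.single 0 R‖)⁻¹ *
          g (‖z‖ + ‖z - EuclideanSpace.single 0 R‖) =
      ENNReal.ofReal (2 * π) * ∫⁻ s in Ioi |R|, g s := by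
  have norm_eq (z : EuclideanSpace ℝ (Fin 3)) : ‖z‖ = √(z 0 ^ 2 + (z 1 ^ 2 + z 2 ^ 2)) := by
    simp [EuclideanSpace.norm_eq, Fin.sum_univ_three, add_assoc]
  simp_rw [norm_sub_single_zero_fin_three, norm_eq]
  rw [lintegral_cylindrical (F := fun t q ↦ ENNReal.ofReal (√(t ^ 2 + q) * √((t - R) ^ 2 + q))⁻¹ *
    g (√(t ^ 2 + q) + √((t - R) ^ 2 + q))) (by fun_prop),
    ← lintegral_lintegral_Ioi_abs_add_abs_sub R hg]
  exact congrArg _ (lintegral_congr fun t ↦ lintegral_focalSum t (t - R) g)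

variable {E : Type*} [NormedAddCommGroup E] [InnerProductSpace ℝ E]

lemma exists_linearIsometryEquiv_single_norm_eq {n : ℕ} (hE : Module.finrank ℝ E = n) (i : Fin n)
    (y : E) : ∃ φ : EuclideanSpace ℝ (Fin n) ≃ₗᵢ[ℝ] E, φ (EuclideanSpace.single i ‖y‖) = y := by
  have : FiniteDimensional ℝ E := .of_finrank_pos (hE ▸ i.pos)
  let ψ : EuclideanSpace ℝ (Fin n) ≃ₗᵢ[ℝ] E :=
    ((stdOrthonormalBasis ℝ E).reindex (finCongr hE)).repr.symm
  have norm_axis : ‖ψ (EuclideanSpace.single i ‖y‖)‖ = ‖y‖ := by simp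
  exact ⟨ψ.trans (Submodule.reflection _), Submodule.reflection_sub norm_axis⟩

variable [MeasurableSpace E] [BorelSpace E]

theorem lintegral_norm_add_norm_sub [FiniteDimensional ℝ E] (hE : Module.finrank ℝ E = 3) (y : E)
    {g : ℝ → ℝ≥0∞} (hg : Measurable g) :
    ∫⁻ z : E, ENNReal.ofReal (‖z‖ * ‖z - y‖)⁻¹ * g (‖z‖ + ‖z - y‖) =
      ENNReal.ofReal (2 * π) * ∫⁻ s in Ioi ‖y‖, g s := by
  obtain ⟨φ, hφ⟩ := exists_linearIsometryEquiv_single_norm_eq hE 0 y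
  have norm_map_sub (z : EuclideanSpace ℝ (Fin 3)) :
      ‖φ z - y‖ = ‖z - EuclideanSpace.single 0 ‖y‖‖ := by
    rw [← φ.norm_map (z - _), map_sub, hφ]
  rw [← φ.measurePreserving.lintegral_comp (by fun_prop)]
  simp_rw [norm_map_sub, φ.norm_map]
  rw [lintegral_norm_add_norm_sub_single _ hg, abs_norm]

lemma lintegral_exp_neg_mul_Ioi {κ : ℝ} (hκ : 0 < κ) (c : ℝ) :
    ∫⁻ s in Ioi c, ENNReal.ofReal (exp (-(κ * s))) = ENNReal.ofReal (exp (-(κ * c)) / κ) := by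
  simp_rw [← neg_mul]
  rw [← ofReal_integral_eq_lintegral_ofReal (integrableOn_exp_mul_Ioi (neg_lt_zero.2 hκ) c)
    (.of_forall fun _ ↦ (exp_pos _).le), integral_exp_mul_Ioi (neg_lt_zero.2 hκ), neg_div_neg_eq]

theorem stmt_0_general [FiniteDimensional ℝ E] (hE : Module.finrank ℝ E = 3) {κ : ℝ} (hκ : 0 < κ)
    (y : E) :
    ∫ z : E, exp (-(κ * ‖z‖)) * exp (-(κ * ‖z - y‖)) / (‖z‖ * ‖z - y‖) =
      2 * π * (exp (-(κ * ‖y‖)) / κ) := by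
  have integrand_eq (z : E) :
      ENNReal.ofReal (exp (-(κ * ‖z‖)) * exp (-(κ * ‖z - y‖)) / (‖z‖ * ‖z - y‖)) =
        ENNReal.ofReal (‖z‖ * ‖z - y‖)⁻¹ * ENNReal.ofReal (exp (-(κ * (‖z‖ + ‖z - y‖)))) := by
    rw [← ENNReal.ofReal_mul (by positivity), mul_add, neg_add, exp_add, div_eq_inv_mul]
  rw [integral_eq_lintegral_of_nonneg_ae (.of_forall fun z ↦ by positivity)
    (Measurable.aestronglyMeasurable (by fun_prop))]
  simp_rw [integrand_eq]
  rw [lintegral_norm_add_norm_sub hE y (g := fun s ↦ ENNReal.ofReal (exp (-(κ * s)))) (by fun_prop),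
    lintegral_exp_neg_mul_Ioi hκ, ← ENNReal.ofReal_mul (by positivity),
    ENNReal.toReal_ofReal (by positivity)]

end TwoCenterIntegral

theorem stmt_0 (y : EuclideanSpace ℝ (Fin 3)) :
    ∫ z : EuclideanSpace ℝ (Fin 3),
      Real.exp (-‖z‖) * Real.exp (-‖z - y‖) / (‖z‖ * ‖z - y‖)
    = 2 * π * Real.exp (-‖y‖) := by
  simpa using stmt_0_general finrank_euclideanSpace_fin one_pos y
end

section
/- Let δ ∈ (0,1), b > 0, and let a₁, a₂, a₃, a₄ be real numbers with a₄ ≠ 0. For η' ∈ ℝ³ and s > 0 define J(η', s) := ∫_{ℝ³} ∫_{ℝ³} ( e^{-s|η - η'|} / |η - η'| ) ( 1 + |a₁ η + a₂ ζ|^δ ) e^{-b |a₃ η + a₄ ζ|} dζ dη. Then there exists a constant c > 0 such that for all η' ∈ ℝ³: (i) J(η', s) ≤ c (1+|η'|)^δ / s² whenever s ≥ 1, and (ii) J(η', s) ≤ c (1+|η'|)^δ / s^{2+δ} whenever 0 < s ≤ √2. -/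
open MeasureTheory Real

/-!
By Peetre's inequality, `1 + ‖x + y‖ ≤ (1 + ‖x‖) (1 + ‖y‖)`. Since `a₄ ≠ 0`, the vector
`a₁ η + a₂ ζ` is a combination of `η` and `u = a₃ η + a₄ ζ`, so the weight `1 + ‖a₁ η + a₂ ζ‖ ^ δ`
is at most a multiple of `(1 + ‖η‖) ^ δ (1 + ‖u‖) ^ δ`, and substituting `u` for `ζ` bounds the
inner integral by a multiple of `(1 + ‖η‖) ^ δ`. Splitting `η = η' + (η - η')` in the same way
leaves a moment of the kernel `exp (-s r) / r ^ p`. There half of the exponential absorbs the weight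
at the price of a factor `(1 + 1 / s) ^ δ`, and scaling what remains gives `s ^ (p - dim E)`. The
factor `(1 + 1 / s) ^ δ` is bounded for `s ≥ 1` and of order `s ^ (-δ)` for bounded `s`.
-/

section Weight

variable {E : Type*} [SeminormedAddCommGroup E] {δ : ℝ}

lemma one_add_norm_add_rpow_le (hδ : 0 ≤ δ) (x y : E) :
    (1 + ‖x + y‖) ^ δ ≤ (1 + ‖x‖) ^ δ * (1 + ‖y‖) ^ δ := by
  rw [← mul_rpow (by positivity) (by positivity)]
  gcongr
  nlinarith [norm_add_le x y, mul_nonneg (norm_nonneg x) (norm_nonneg y)]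

lemma one_add_norm_smul_rpow_le [NormedSpace ℝ E] (hδ : 0 ≤ δ) (c : ℝ) (x : E) :
    (1 + ‖c • x‖) ^ δ ≤ (1 + |c|) ^ δ * (1 + ‖x‖) ^ δ := by
  rw [← mul_rpow (by positivity) (by positivity), norm_smul, norm_eq_abs]
  gcongr
  linarith [abs_nonneg c, norm_nonneg x]

lemma one_add_rpow_le_two_mul (hδ : 0 ≤ δ) {r : ℝ} (hr : 0 ≤ r) :
    1 + r ^ δ ≤ 2 * (1 + r) ^ δ := by
  have one_le : 1 ≤ (1 + r) ^ δ := one_le_rpow (by linarith) hδ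
  have rpow_le : r ^ δ ≤ (1 + r) ^ δ := by gcongr; linarith
  linarith

lemma one_add_norm_smul_add_smul_rpow_le [NormedSpace ℝ E] (hδ : 0 ≤ δ) (α β : ℝ) (x y : E) :
    1 + ‖α • x + β • y‖ ^ δ ≤
      2 * (1 + |α|) ^ δ * (1 + |β|) ^ δ * ((1 + ‖x‖) ^ δ * (1 + ‖y‖) ^ δ) :=
  calc 1 + ‖α • x + β • y‖ ^ δ
      ≤ 2 * (1 + ‖α • x + β • y‖) ^ δ := one_add_rpow_le_two_mul hδ (norm_nonneg _)
    _ ≤ 2 * ((1 + ‖α • x‖) ^ δ * (1 + ‖β • y‖) ^ δ) := by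
        gcongr; exact one_add_norm_add_rpow_le hδ _ _
    _ ≤ 2 * ((1 + |α|) ^ δ * (1 + ‖x‖) ^ δ * ((1 + |β|) ^ δ * (1 + ‖y‖) ^ δ)) := by
        gcongr <;> exact one_add_norm_smul_rpow_le hδ _ _
    _ = _ := by ring

lemma one_add_rpow_le_mul_exp (hδ : 0 ≤ δ) {ε r : ℝ} (hε : 0 < ε) (hr : 0 ≤ r) :
    (1 + r) ^ δ ≤ (1 + δ / ε) ^ δ * exp (ε * r) := by
  rcases hδ.eq_or_lt with rfl | hδ_pos
  · simpa using mul_nonneg hε.le hr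
  have base_le : 1 + r ≤ (1 + δ / ε) * exp (ε * r / δ) := calc
    1 + r ≤ (1 + δ / ε) * (1 + ε * r / δ) := by
      have expand : (1 + δ / ε) * (1 + ε * r / δ) = 1 + r + δ / ε + ε * r / δ := by
        field_simp; ring
      have : 0 ≤ δ / ε + ε * r / δ := by positivity
      linarith
    _ ≤ _ := by gcongr; linarith [add_one_le_exp (ε * r / δ)]
  calc (1 + r) ^ δ ≤ ((1 + δ / ε) * exp (ε * r / δ)) ^ δ := by gcongr
    _ = _ := by
      rw [mul_rpow (by positivity) (exp_pos _).le, ← exp_mul, div_mul_cancel₀ _ hδ_pos.ne']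

end Weight

section ChangeOfVariables

variable {E F : Type*} [NormedAddCommGroup E] [NormedSpace ℝ E] [FiniteDimensional ℝ E]
  [MeasurableSpace E] [BorelSpace E] {μ : Measure E} [μ.IsAddHaarMeasure]
  [NormedAddCommGroup F] {a : ℝ}

lemma integrable_comp_add_smul {f : E → F} (hf : Integrable f μ) (ha : a ≠ 0) (v : E) :
    Integrable (fun x ↦ f (v + a • x)) μ := by
  simpa only [smul_add, smul_inv_smul₀ ha] using (hf.comp_smul ha).comp_add_left (a⁻¹ • v)

lemma integral_comp_add_smul [NormedSpace ℝ F] (f : E → F) (ha : a ≠ 0) (v : E) :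
    ∫ x, f (v + a • x) ∂μ = |(a ^ Module.finrank ℝ E)⁻¹| • ∫ x, f x ∂μ := by
  rw [← Measure.integral_comp_smul, ← integral_add_left_eq_self (fun x ↦ f (a • x)) (a⁻¹ • v)]
  simp only [smul_add, smul_inv_smul₀ ha]

end ChangeOfVariables

section Yukawa

variable {E : Type*} [NormedAddCommGroup E]

/-- The Yukawa-type kernel `exp (-s r) / r ^ p` at `r = ‖u‖`; the Yukawa potential is `p = 1`.
For `p ≠ 0` its value at `u = 0` is `0`. -/
noncomputable def yukawa (p s : ℝ) (u : E) : ℝ := exp (-s * ‖u‖) / ‖u‖ ^ p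

lemma yukawa_nonneg (p s : ℝ) (u : E) : 0 ≤ yukawa p s u := by
  unfold yukawa
  positivity

lemma measurable_yukawa [MeasurableSpace E] [OpensMeasurableSpace E] (p s : ℝ) :
    Measurable (yukawa p s : E → ℝ) := by
  unfold yukawa
  fun_prop

lemma one_add_norm_rpow_mul_yukawa_le {δ s : ℝ} (hδ : 0 ≤ δ) (hs : 0 < s) (p : ℝ) (u : E) :
    (1 + ‖u‖) ^ δ * yukawa p s u ≤ (1 + δ / (s / 2)) ^ δ * yukawa p (s / 2) u := by
  have exp_split : exp (s / 2 * ‖u‖) * exp (-s * ‖u‖) = exp (-(s / 2) * ‖u‖) := by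
    rw [← exp_add]
    ring_nf
  calc (1 + ‖u‖) ^ δ * yukawa p s u
      ≤ (1 + δ / (s / 2)) ^ δ * exp (s / 2 * ‖u‖) * yukawa p s u := by
        gcongr
        · exact yukawa_nonneg p s u
        · exact one_add_rpow_le_mul_exp hδ (half_pos hs) (norm_nonneg u)
    _ = (1 + δ / (s / 2)) ^ δ * yukawa p (s / 2) u := by
        rw [yukawa, yukawa, ← exp_split]
        ring

lemma one_add_norm_rpow_mul_yukawa_sub_le {δ : ℝ} (hδ : 0 ≤ δ) (p s : ℝ) (x y : E) :
    (1 + ‖x‖) ^ δ * yukawa p s (x - y) ≤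
      (1 + ‖y‖) ^ δ * ((1 + ‖x - y‖) ^ δ * yukawa p s (x - y)) := by
  rw [← mul_assoc, mul_comm ((1 + ‖y‖) ^ δ)]
  gcongr
  · exact yukawa_nonneg p s _
  · simpa using one_add_norm_add_rpow_le hδ (x - y) y

variable [NormedSpace ℝ E]

lemma yukawa_eq_rpow_mul_yukawa_one_smul {s : ℝ} (hs : 0 < s) (p : ℝ) (u : E) :
    yukawa p s u = s ^ p * yukawa p 1 (s • u) := by
  rw [yukawa, yukawa, norm_smul, norm_eq_abs, abs_of_pos hs, mul_rpow hs.le (norm_nonneg u),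
    ← mul_div_assoc, mul_div_mul_left _ _ (rpow_pos_of_pos hs p).ne', neg_one_mul, neg_mul]

variable [FiniteDimensional ℝ E] [MeasurableSpace E] [BorelSpace E] {μ : Measure E}
  [μ.IsAddHaarMeasure]

lemma integral_yukawa {s : ℝ} (hs : 0 < s) (p : ℝ) :
    ∫ u : E, yukawa p s u ∂μ = (∫ u, yukawa p 1 u ∂μ) / s ^ (Module.finrank ℝ E - p) := by
  simp_rw [yukawa_eq_rpow_mul_yukawa_one_smul hs p]
  rw [integral_const_mul, Measure.integral_comp_smul_of_nonneg μ _ s (hR := hs.le), rpow_sub hs,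
    rpow_natCast, smul_eq_mul]
  have := rpow_pos_of_pos hs p
  field_simp

variable [Nontrivial E] {p δ s : ℝ}

lemma integrable_yukawa (hp : p < Module.finrank ℝ E) (hs : 0 < s) :
    Integrable (yukawa p s : E → ℝ) μ := by
  refine (integrable_fun_norm_addHaar μ (f := fun r ↦ exp (-s * r) / r ^ p)).mpr ?_
  have radial := integrableOn_rpow_mul_exp_neg_mul_rpow
    (show -1 < Module.finrank ℝ E - 1 - p by linarith) one_pos hs
  refine radial.congr_fun (fun r (hr : 0 < r) ↦ ?_) measurableSet_Ioi
  have one_le_dim : 1 ≤ Module.finrank ℝ E := Module.finrank_pos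
  have rpow_dim : r ^ ((Module.finrank ℝ E : ℝ) - 1) = r ^ (Module.finrank ℝ E - 1) := by
    rw [← rpow_natCast, Nat.cast_pred one_le_dim]
  simp only [rpow_one, smul_eq_mul]
  rw [rpow_sub hr, rpow_dim]
  ring

lemma integrable_one_add_norm_rpow_mul_yukawa (hδ : 0 ≤ δ) (hp : p < Module.finrank ℝ E)
    (hs : 0 < s) : Integrable (fun u : E ↦ (1 + ‖u‖) ^ δ * yukawa p s u) μ := by
  have weight_measurable : Measurable (fun u : E ↦ (1 + ‖u‖) ^ δ) := by fun_prop
  refine ((integrable_yukawa hp (half_pos hs)).const_mul ((1 + δ / (s / 2)) ^ δ)).mono'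
    (weight_measurable.mul (measurable_yukawa p s)).aestronglyMeasurable (.of_forall fun u ↦ ?_)
  rw [norm_of_nonneg (mul_nonneg (by positivity) (yukawa_nonneg p s u))]
  exact one_add_norm_rpow_mul_yukawa_le hδ hs p u

variable (μ) in
lemma exists_integral_one_add_norm_rpow_mul_yukawa_le (hδ : 0 ≤ δ)
    (hp : p < Module.finrank ℝ E) :
    ∃ C, 0 ≤ C ∧ ∀ s, 0 < s → ∫ u : E, (1 + ‖u‖) ^ δ * yukawa p s u ∂μ ≤
      C * (1 + s⁻¹) ^ δ / s ^ (Module.finrank ℝ E - p) := by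
  set I := ∫ u : E, yukawa p 1 u ∂μ
  have I_nonneg : 0 ≤ I := integral_nonneg (yukawa_nonneg p 1)
  refine ⟨(1 + 2 * δ) ^ δ * 2 ^ (Module.finrank ℝ E - p) * I, by positivity, fun s hs ↦ ?_⟩
  have base_le : 1 + δ / (s / 2) ≤ (1 + 2 * δ) * (1 + s⁻¹) := by
    have expand : (1 + 2 * δ) * (1 + s⁻¹) = 1 + δ / (s / 2) + 2 * δ + s⁻¹ := by field_simp; ring
    have : 0 ≤ 2 * δ + s⁻¹ := by positivity
    linarith
  calc ∫ u : E, (1 + ‖u‖) ^ δ * yukawa p s u ∂μ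
      ≤ ∫ u : E, (1 + δ / (s / 2)) ^ δ * yukawa p (s / 2) u ∂μ :=
        integral_mono (integrable_one_add_norm_rpow_mul_yukawa hδ hp hs)
          ((integrable_yukawa hp (half_pos hs)).const_mul _)
          (one_add_norm_rpow_mul_yukawa_le hδ hs p)
    _ = (1 + δ / (s / 2)) ^ δ * (I / (s / 2) ^ (Module.finrank ℝ E - p)) := by
        rw [integral_const_mul, integral_yukawa (half_pos hs)]
    _ ≤ ((1 + 2 * δ) * (1 + s⁻¹)) ^ δ * (I / (s / 2) ^ (Module.finrank ℝ E - p)) := by gcongr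
    _ = _ := by
        rw [mul_rpow (by positivity) (by positivity), div_rpow hs.le zero_le_two,
          div_div_eq_mul_div]
        ring

lemma integrable_one_add_norm_rpow_mul_yukawa_sub (hδ : 0 ≤ δ) (hp : p < Module.finrank ℝ E)
    (hs : 0 < s) (y : E) : Integrable (fun x ↦ (1 + ‖x‖) ^ δ * yukawa p s (x - y)) μ := by
  have weight_measurable : Measurable (fun x : E ↦ (1 + ‖x‖) ^ δ) := by fun_prop
  have kernel_measurable : Measurable (fun x ↦ yukawa p s (x - y)) :=
    (measurable_yukawa p s).comp (measurable_id.sub_const y)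
  refine (((integrable_one_add_norm_rpow_mul_yukawa hδ hp hs).comp_sub_right y).const_mul
    ((1 + ‖y‖) ^ δ)).mono' (weight_measurable.mul kernel_measurable).aestronglyMeasurable
    (.of_forall fun x ↦ ?_)
  rw [norm_of_nonneg (mul_nonneg (by positivity) (yukawa_nonneg p s _))]
  exact one_add_norm_rpow_mul_yukawa_sub_le hδ p s x y

variable (μ) in
lemma exists_integral_one_add_norm_rpow_mul_yukawa_sub_le (hδ : 0 ≤ δ)
    (hp : p < Module.finrank ℝ E) :
    ∃ C, 0 ≤ C ∧ ∀ (y : E) (s : ℝ), 0 < s → ∫ x, (1 + ‖x‖) ^ δ * yukawa p s (x - y) ∂μ ≤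
      C * (1 + ‖y‖) ^ δ * (1 + s⁻¹) ^ δ / s ^ (Module.finrank ℝ E - p) := by
  obtain ⟨C, hC, moment_le⟩ := exists_integral_one_add_norm_rpow_mul_yukawa_le μ hδ hp
  refine ⟨C, hC, fun y s hs ↦ ?_⟩
  calc ∫ x, (1 + ‖x‖) ^ δ * yukawa p s (x - y) ∂μ
      ≤ ∫ x, (1 + ‖y‖) ^ δ * ((1 + ‖x - y‖) ^ δ * yukawa p s (x - y)) ∂μ :=
        integral_mono (integrable_one_add_norm_rpow_mul_yukawa_sub hδ hp hs y)
          (((integrable_one_add_norm_rpow_mul_yukawa hδ hp hs).comp_sub_right y).const_mul _)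
          fun x ↦ one_add_norm_rpow_mul_yukawa_sub_le hδ p s x y
    _ = (1 + ‖y‖) ^ δ * ∫ u, (1 + ‖u‖) ^ δ * yukawa p s u ∂μ := by
        rw [integral_const_mul,
          integral_sub_right_eq_self (fun u ↦ (1 + ‖u‖) ^ δ * yukawa p s u) y]
    _ ≤ (1 + ‖y‖) ^ δ * (C * (1 + s⁻¹) ^ δ / s ^ (Module.finrank ℝ E - p)) := by
        gcongr; exact moment_le s hs
    _ = _ := by ring

end Yukawa

section Jacobi

variable {E : Type*} [NormedAddCommGroup E] [NormedSpace ℝ E] [MeasurableSpace E]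

/-- The integral `J(η', s)` over two Jacobi coordinates `η`, `ζ`, with Yukawa-type kernels of
arbitrary exponents `p` and `q`; in the three-particle problem `p = 1`, `q = 0` and `E = ℝ³`. -/
noncomputable def jacobiIntegral (μ : Measure E) (p q δ b a₁ a₂ a₃ a₄ : ℝ) (η' : E) (s : ℝ) : ℝ :=
  ∫ η, ∫ ζ, yukawa p s (η - η') * (1 + ‖a₁ • η + a₂ • ζ‖ ^ δ) * yukawa q b (a₃ • η + a₄ • ζ) ∂μ ∂μ

variable [BorelSpace E] [FiniteDimensional ℝ E] [Nontrivial E] (μ : Measure E)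
  [μ.IsAddHaarMeasure] {p q δ b a₄ : ℝ}

lemma exists_integral_one_add_norm_rpow_mul_yukawa_comp_le (hδ : 0 ≤ δ) (hb : 0 < b)
    (hq : q < Module.finrank ℝ E) (a₁ a₂ a₃ : ℝ) (ha₄ : a₄ ≠ 0) :
    ∃ C, 0 ≤ C ∧ ∀ η : E,
      ∫ ζ, (1 + ‖a₁ • η + a₂ • ζ‖ ^ δ) * yukawa q b (a₃ • η + a₄ • ζ) ∂μ ≤
        C * (1 + ‖η‖) ^ δ := by
  set β := a₂ / a₄
  set α := a₁ - β * a₃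
  set K := 2 * (1 + |α|) ^ δ * (1 + |β|) ^ δ
  set g : E → ℝ := fun u ↦ (1 + ‖u‖) ^ δ * yukawa q b u
  have g_nonneg (u : E) : 0 ≤ g u := mul_nonneg (by positivity) (yukawa_nonneg q b u)
  have recombine (η ζ : E) : a₁ • η + a₂ • ζ = α • η + β • (a₃ • η + a₄ • ζ) := by
    have : a₂ = β * a₄ := (div_mul_cancel₀ a₂ ha₄).symm
    rw [this]
    module
  have integrand_le (η ζ : E) :
      (1 + ‖a₁ • η + a₂ • ζ‖ ^ δ) * yukawa q b (a₃ • η + a₄ • ζ) ≤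
        K * (1 + ‖η‖) ^ δ * g (a₃ • η + a₄ • ζ) := by
    rw [recombine, ← mul_assoc, mul_assoc K]
    exact mul_le_mul_of_nonneg_right (one_add_norm_smul_add_smul_rpow_le hδ α β _ _)
      (yukawa_nonneg q b _)
  refine ⟨K * (|(a₄ ^ Module.finrank ℝ E)⁻¹| * ∫ u, g u ∂μ),
    mul_nonneg (by positivity) (mul_nonneg (abs_nonneg _) (integral_nonneg g_nonneg)),
    fun η ↦ ?_⟩
  calc ∫ ζ, (1 + ‖a₁ • η + a₂ • ζ‖ ^ δ) * yukawa q b (a₃ • η + a₄ • ζ) ∂μ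
      ≤ ∫ ζ, K * (1 + ‖η‖) ^ δ * g (a₃ • η + a₄ • ζ) ∂μ :=
        integral_mono_of_nonneg
          (.of_forall fun ζ ↦ mul_nonneg (by positivity) (yukawa_nonneg q b _))
          ((integrable_comp_add_smul (integrable_one_add_norm_rpow_mul_yukawa hδ hq hb)
            ha₄ _).const_mul _)
          (.of_forall (integrand_le η))
    _ = K * (1 + ‖η‖) ^ δ * (|(a₄ ^ Module.finrank ℝ E)⁻¹| * ∫ u, g u ∂μ) := by
        rw [integral_const_mul, integral_comp_add_smul g ha₄, smul_eq_mul]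
    _ = _ := by ring

lemma exists_jacobiIntegral_le (hδ : 0 ≤ δ) (hb : 0 < b) (hp : p < Module.finrank ℝ E)
    (hq : q < Module.finrank ℝ E) (a₁ a₂ a₃ : ℝ) (ha₄ : a₄ ≠ 0) :
    ∃ C, 0 < C ∧ ∀ (η' : E) (s : ℝ), 0 < s → jacobiIntegral μ p q δ b a₁ a₂ a₃ a₄ η' s ≤
      C * (1 + ‖η'‖) ^ δ * (1 + s⁻¹) ^ δ / s ^ (Module.finrank ℝ E - p) := by
  obtain ⟨A, hA, inner_le⟩ :=
    exists_integral_one_add_norm_rpow_mul_yukawa_comp_le μ hδ hb hq a₁ a₂ a₃ ha₄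
  obtain ⟨B, hB, outer_le⟩ := exists_integral_one_add_norm_rpow_mul_yukawa_sub_le μ hδ hp
  refine ⟨A * B + 1, by positivity, fun η' s hs ↦ ?_⟩
  set d := Module.finrank ℝ E
  have inner_integral_le (η : E) :
      ∫ ζ, yukawa p s (η - η') * (1 + ‖a₁ • η + a₂ • ζ‖ ^ δ) * yukawa q b (a₃ • η + a₄ • ζ) ∂μ ≤
        A * ((1 + ‖η‖) ^ δ * yukawa p s (η - η')) := by
    simp only [mul_assoc]
    rw [integral_const_mul, ← mul_assoc, mul_comm (A * _)]
    exact mul_le_mul_of_nonneg_left (inner_le η) (yukawa_nonneg p s _)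
  calc jacobiIntegral μ p q δ b a₁ a₂ a₃ a₄ η' s
      ≤ ∫ η, A * ((1 + ‖η‖) ^ δ * yukawa p s (η - η')) ∂μ :=
        integral_mono_of_nonneg
          (.of_forall fun η ↦ integral_nonneg fun ζ ↦ mul_nonneg
            (mul_nonneg (yukawa_nonneg p s _) (by positivity)) (yukawa_nonneg q b _))
          ((integrable_one_add_norm_rpow_mul_yukawa_sub hδ hp hs η').const_mul A)
          (.of_forall inner_integral_le)
    _ = A * ∫ η, (1 + ‖η‖) ^ δ * yukawa p s (η - η') ∂μ := integral_const_mul _ _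
    _ ≤ A * (B * (1 + ‖η'‖) ^ δ * (1 + s⁻¹) ^ δ / s ^ (d - p)) := by
        gcongr; exact outer_le η' s hs
    _ = A * B * ((1 + ‖η'‖) ^ δ * (1 + s⁻¹) ^ δ / s ^ (d - p)) := by ring
    _ ≤ (A * B + 1) * ((1 + ‖η'‖) ^ δ * (1 + s⁻¹) ^ δ / s ^ (d - p)) := by gcongr; linarith
    _ = _ := by ring

end Jacobi

theorem stmt_9_general {E : Type*} [NormedAddCommGroup E] [NormedSpace ℝ E]
    [FiniteDimensional ℝ E] [Nontrivial E] [MeasurableSpace E] [BorelSpace E]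
    (μ : Measure E) [μ.IsAddHaarMeasure] {p q δ b a₄ : ℝ} (hp : p < Module.finrank ℝ E)
    (hq : q < Module.finrank ℝ E) (hδ : 0 ≤ δ) (hb : 0 < b) (a₁ a₂ a₃ : ℝ) (ha₄ : a₄ ≠ 0) (S : ℝ) :
    ∃ c > (0 : ℝ), ∀ (η' : E) (s : ℝ),
      (1 ≤ s → jacobiIntegral μ p q δ b a₁ a₂ a₃ a₄ η' s ≤
        c * (1 + ‖η'‖) ^ δ / s ^ (Module.finrank ℝ E - p)) ∧
      (0 < s → s ≤ S → jacobiIntegral μ p q δ b a₁ a₂ a₃ a₄ η' s ≤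
        c * (1 + ‖η'‖) ^ δ / s ^ (Module.finrank ℝ E - p + δ)) := by
  obtain ⟨C, hC, bound⟩ := exists_jacobiIntegral_le μ hδ hb hp hq a₁ a₂ a₃ ha₄
  refine ⟨C * (2 + |S|) ^ δ, by positivity, fun η' s ↦ ⟨fun hs ↦ ?_, fun hs hsS ↦ ?_⟩⟩
  · have hs_pos : 0 < s := one_pos.trans_le hs
    have factor_le : (1 + s⁻¹) ^ δ ≤ (2 + |S|) ^ δ := by
      have : 1 + s⁻¹ ≤ 2 + |S| := by linarith [inv_le_one_of_one_le₀ hs, abs_nonneg S]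
      gcongr
    calc _ ≤ C * (1 + ‖η'‖) ^ δ * (1 + s⁻¹) ^ δ / s ^ (Module.finrank ℝ E - p) :=
          bound η' s hs_pos
      _ ≤ C * (1 + ‖η'‖) ^ δ * (2 + |S|) ^ δ / s ^ (Module.finrank ℝ E - p) := by gcongr
      _ = _ := by ring
  · have factor_le : (1 + s⁻¹) ^ δ ≤ (2 + |S|) ^ δ / s ^ δ := by
      rw [← div_rpow (by positivity) hs.le]
      gcongr
      rw [le_div_iff₀ hs, add_mul, inv_mul_cancel₀ hs.ne']
      linarith [le_abs_self S]
    calc _ ≤ C * (1 + ‖η'‖) ^ δ * (1 + s⁻¹) ^ δ / s ^ (Module.finrank ℝ E - p) :=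
          bound η' s hs
      _ ≤ C * (1 + ‖η'‖) ^ δ * ((2 + |S|) ^ δ / s ^ δ) / s ^ (Module.finrank ℝ E - p) := by gcongr
      _ = _ := by
        rw [rpow_add hs]
        ring

theorem stmt_9 (δ b a₁ a₂ a₃ a₄ : ℝ) (hδ : δ ∈ Set.Ioo (0 : ℝ) 1) (hb : 0 < b)
    (ha₄ : a₄ ≠ 0)
    (J : EuclideanSpace ℝ (Fin 3) → ℝ → ℝ)
    (hJ : ∀ η' s, J η' s = ∫ η : EuclideanSpace ℝ (Fin 3),
      ∫ ζ : EuclideanSpace ℝ (Fin 3),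
        (Real.exp (-s * ‖η - η'‖) / ‖η - η'‖) *
          (1 + ‖a₁ • η + a₂ • ζ‖ ^ δ) * Real.exp (-b * ‖a₃ • η + a₄ • ζ‖)) :
    ∃ c > (0 : ℝ), ∀ η' : EuclideanSpace ℝ (Fin 3), ∀ s : ℝ,
      (1 ≤ s → J η' s ≤ c * (1 + ‖η'‖) ^ δ / s ^ 2) ∧
      (0 < s → s ≤ Real.sqrt 2 → J η' s ≤ c * (1 + ‖η'‖) ^ δ / s ^ (2 + δ)) := by
  simpa [jacobiIntegral, yukawa, hJ, show (3 : ℝ) - 1 = 2 by norm_num] using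
    stmt_9_general (volume : Measure (EuclideanSpace ℝ (Fin 3))) (p := 1) (q := 0)
      (by norm_num) (by norm_num) hδ.1.le hb a₁ a₂ a₃ ha₄ √2
end
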